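/- arXiv:2602.04417 — 2 statements merged into one kernel-verified Lean document; each statement's English description precedes it below -/
import Mathlib

section
/- Let V be a nonempty finite type, π : ℝ^d → V → ℝ a parameterized policy (π θ j > 0, ∑_j π θ j = 1, each θ ↦ π θ j differentiable at θ₀), and f : ℝ^d → V → ℝ with each θ ↦ f θ j differentiable at θ₀. Then the Fréchet derivative at θ₀ of θ ↦ ∑_{j∈V} π θ j · f θ j equals ∑_{j∈V} π θ₀ j · f θ₀ j · D_θ(log(π θ j))|_{θ₀} + ∑_{j∈V} π θ₀ j · D_θ(f θ j)|_{θ₀}. -/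
open Finset

theorem smulRight_eq_smul {R M : Type*} [CommSemiring R] [TopologicalSpace R]
    [ContinuousMul R] [AddCommMonoid M] [TopologicalSpace M] [Module R M]
    (c : M →L[R] R) (a : R) : c.smulRight a = a • c := by
  ext v
  exact mul_comm (c v) a

section LogDerivative

variable {E F : Type*} [NormedAddCommGroup E] [NormedSpace ℝ E]
  [NormedAddCommGroup F] [NormedSpace ℝ F]

theorem smul_fderiv_log {p : E → ℝ} {x : E} (hp : DifferentiableAt ℝ p x) (hpx : p x ≠ 0) :
    p x • fderiv ℝ (fun y => Real.log (p y)) x = fderiv ℝ p x := by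
  rw [fderiv.log hp hpx, smul_inv_smul₀ hpx]

theorem hasFDerivAt_smul_of_fderiv_log {p : E → ℝ} {f : E → F} {x : E}
    (hp : DifferentiableAt ℝ p x) (hpx : p x ≠ 0) (hf : DifferentiableAt ℝ f x) :
    HasFDerivAt (fun y => p y • f y)
      ((p x • fderiv ℝ (fun y => Real.log (p y)) x).smulRight (f x) + p x • fderiv ℝ f x) x := by
  rw [smul_fderiv_log hp hpx, add_comm]
  exact hp.hasFDerivAt.fun_smul hf.hasFDerivAt

/- `Real.log` is `log |·|`, so a negative weight contributes the derivative of the logarithm of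
its absolute value. -/
theorem expectation_gradient_product_rule_general {ι : Type*} (s : Finset ι)
    {π : E → ι → ℝ} {f : E → ι → F} {θ₀ : E}
    (hπdiff : ∀ j ∈ s, DifferentiableAt ℝ (fun θ => π θ j) θ₀) (hπne : ∀ j ∈ s, π θ₀ j ≠ 0)
    (hfdiff : ∀ j ∈ s, DifferentiableAt ℝ (fun θ => f θ j) θ₀) :
    HasFDerivAt (fun θ => ∑ j ∈ s, π θ j • f θ j)
      ((∑ j ∈ s, (π θ₀ j • fderiv ℝ (fun θ => Real.log (π θ j)) θ₀).smulRight (f θ₀ j))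
        + ∑ j ∈ s, π θ₀ j • fderiv ℝ (fun θ => f θ j) θ₀) θ₀ := by
  rw [← sum_add_distrib]
  exact HasFDerivAt.fun_sum fun j hj =>
    hasFDerivAt_smul_of_fderiv_log (hπdiff j hj) (hπne j hj) (hfdiff j hj)

end LogDerivative

/-- For a parameterized policy `π` (positive, summing to one,
differentiable at `θ₀`) and `f : ℝ^d → V → ℝ` with each `θ ↦ f θ j` differentiable at
`θ₀`, the Fréchet derivative at `θ₀` of `θ ↦ ∑_j π θ j · f θ j` equals
`∑_j π θ₀ j · f θ₀ j · D_θ(log π θ j)|_{θ₀} + ∑_j π θ₀ j · D_θ(f θ j)|_{θ₀}`. -/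
theorem expectation_gradient_product_rule
    {V : Type*} [Fintype V] [Nonempty V] (d : ℕ)
    (π : (Fin d → ℝ) → V → ℝ) (θ₀ : Fin d → ℝ)
    (hπpos : ∀ θ j, 0 < π θ j) (hπsum : ∀ θ, ∑ j, π θ j = 1)
    (hπdiff : ∀ j, DifferentiableAt ℝ (fun θ => π θ j) θ₀)
    (f : (Fin d → ℝ) → V → ℝ)
    (hfdiff : ∀ j, DifferentiableAt ℝ (fun θ => f θ j) θ₀) :
    fderiv ℝ (fun θ => ∑ j, π θ j * f θ j) θ₀
      = (∑ j, (π θ₀ j * f θ₀ j) • fderiv ℝ (fun θ => Real.log (π θ j)) θ₀)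
        + ∑ j, (π θ₀ j) • fderiv ℝ (fun θ => f θ j) θ₀ := by
  simpa only [smul_eq_mul, smulRight_eq_smul, smul_smul, mul_comm (f θ₀ _)] using
    (expectation_gradient_product_rule_general univ (fun j _ => hπdiff j)
      (fun j _ => (hπpos θ₀ j).ne') (fun j _ => hfdiff j)).fderiv
end

section
/- Let Y be a nonempty finite type, π : ℝ^d → Y → ℝ a parameterized policy (π θ y > 0, ∑_y π θ y = 1, each θ ↦ π θ y differentiable at θ₀), and π_ref : Y → ℝ with π_ref y > 0 and ∑_y π_ref y = 1. Fix N ≥ 1 and let the expectation be over N i.i.d. samples (y₁, …, y_N) drawn from π θ₀ (i.e. a sum over tuples in Y^N weighted by ∏_{j=1}^N π θ₀ y_j). Then E_{(y₁,…,y_N)} [ ∑_{j=1}^N D_θ(log(π θ y_j))|_{θ₀} · (1/N) · ∑_{i=1}^N log(π θ₀ y_i / π_ref y_i) ] = D_θ( ∑_{y∈Y} π θ y · log(π θ y / π_ref y) )|_{θ₀}, i.e. the group-based regularizer gradient equals the exact reverse KL gradient. -/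
open Finset

/-!
Both gradients equal `∑ y, log (π θ₀ y / πref y) • D(π · y)(θ₀)`.

Differentiating `∑ y, π θ y = 1` gives `∑ y, D(π · y)(θ₀) = 0`, that is, the score
`D(log π · y)(θ₀)` has mean zero under `π θ₀`. In the expectation of the product of
`∑ i, log (π θ₀ (y i) / πref (y i))` with the sum of the scores, independence therefore kills the
cross terms `i ≠ j`, and the `N` equal diagonal terms compensate the factor `1 / N`. In the
derivative `∑ y, (log (π θ₀ y / πref y) + 1) • D(π · y)(θ₀)` of the divergence, the same identity
kills the contribution of the `1`.
-/

open scoped Topology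

section IIDExpectation

variable {ι Y R V : Type*} [Fintype ι] [DecidableEq ι] [Fintype Y] [CommSemiring R]
  [AddCommMonoid V] [Module R V]

/-- The expectation of `f` over a family, indexed by `ι`, of independent samples from the mass
function `p` on the finite type `Y`. The values of `f` may lie in any module, so that it
applies to gradients; `∑ y, p y = 1` is not part of the definition. -/
def iidExpectation (p : Y → R) (f : (ι → Y) → V) : V :=
  ∑ ys, (∏ k, p (ys k)) • f ys

lemma iidExpectation_sum {κ : Type*} (p : Y → R) (s : Finset κ) (f : κ → (ι → Y) → V) :
    iidExpectation p (fun ys => ∑ a ∈ s, f a ys) = ∑ a ∈ s, iidExpectation p (f a) := by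
  simp only [iidExpectation, smul_sum]
  exact sum_comm

lemma iidExpectation_const_smul (p : Y → R) (c : R) (f : (ι → Y) → V) :
    iidExpectation p (fun ys => c • f ys) = c • iidExpectation p f := by
  simp only [iidExpectation, smul_sum, smul_comm c]

lemma iidExpectation_const {p : Y → R} (hp : ∑ y, p y = 1) (v : V) :
    iidExpectation p (fun _ : ι → Y => v) = v := by
  have total_mass : ∑ ys : ι → Y, ∏ k, p (ys k) = 1 := by
    rw [← Fintype.prod_sum fun _ : ι => p, hp, prod_const_one]
  rw [iidExpectation, ← sum_smul, total_mass, one_smul]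

lemma iidExpectation_eq_sum_smul_iidExpectation (p : Y → R) (i : ι) (f : (ι → Y) → V) :
    iidExpectation p f = ∑ y, p y • iidExpectation p
      (fun zs : {k // k ≠ i} → Y => f ((Equiv.funSplitAt i Y).symm (y, zs))) := by
  simp only [iidExpectation, smul_sum, smul_smul]
  rw [← Fintype.sum_prod_type', ← (Equiv.funSplitAt i Y).sum_comp]
  refine sum_congr rfl fun ys _ => ?_
  rw [Fintype.prod_eq_mul_prod_subtype_ne _ i, Prod.mk.eta, Equiv.symm_apply_apply]
  rfl

lemma iidExpectation_eval {p : Y → R} (hp : ∑ y, p y = 1) (i : ι) (f : Y → V) :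
    iidExpectation p (fun ys : ι → Y => f (ys i)) = ∑ y, p y • f y := by
  simp [iidExpectation_eq_sum_smul_iidExpectation p i, iidExpectation_const hp]

lemma iidExpectation_eval_eval {p : Y → R} (hp : ∑ y, p y = 1) {i j : ι} (hij : i ≠ j)
    (f : Y → Y → V) :
    iidExpectation p (fun ys : ι → Y => f (ys i) (ys j)) = ∑ y, p y • ∑ z, p z • f y z := by
  rw [iidExpectation_eq_sum_smul_iidExpectation p i]
  refine sum_congr rfl fun y _ => ?_
  simp [hij.symm, ← iidExpectation_eval hp (⟨j, hij.symm⟩ : {k // k ≠ i})]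

lemma iidExpectation_smul_eval_eq_ite {p : Y → R} (hp : ∑ y, p y = 1) (b : Y → R) {s : Y → V}
    (hs : ∑ y, p y • s y = 0) (i j : ι) :
    iidExpectation p (fun ys : ι → Y => b (ys i) • s (ys j)) =
      if i = j then ∑ y, p y • b y • s y else 0 := by
  split_ifs with hij
  · subst hij
    exact iidExpectation_eval hp i fun y => b y • s y
  · rw [iidExpectation_eval_eval hp hij fun y z => b y • s z]
    simp only [smul_comm _ (b _), ← smul_sum, hs, smul_zero, sum_const_zero]

lemma iidExpectation_sum_smul_sum {p : Y → R} (hp : ∑ y, p y = 1) (b : Y → R) {s : Y → V}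
    (hs : ∑ y, p y • s y = 0) :
    iidExpectation p (fun ys : ι → Y => (∑ i, b (ys i)) • ∑ j, s (ys j)) =
      Fintype.card ι • ∑ y, p y • b y • s y := by
  simp only [sum_smul, smul_sum (s := univ (α := ι)), iidExpectation_sum,
    iidExpectation_smul_eval_eq_ite hp b hs, sum_ite_eq', mem_univ, if_true, sum_const,
    card_univ]

end IIDExpectation

section Calculus

variable {E Y : Type*} [NormedAddCommGroup E] [NormedSpace ℝ E] [Fintype Y]

/-- The Kullback–Leibler divergence `KL(p‖q)` of mass functions on a finite type, in nats.
Terms with `p y = 0` vanish, as usual; so do terms with `q y = 0 < p y`, by the convention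
`x / 0 = 0`, although the divergence is then infinite. -/
noncomputable def klDivergence (p q : Y → ℝ) : ℝ :=
  ∑ y, p y * Real.log (p y / q y)

lemma hasDerivAt_mul_log_div {x q : ℝ} (hx : x ≠ 0) (hq : q ≠ 0) :
    HasDerivAt (fun t => t * Real.log (t / q)) (Real.log (x / q) + 1) x := by
  have hlog : HasDerivAt (fun t => Real.log (t / q)) x⁻¹ x := by
    convert ((hasDerivAt_id' x).div_const q).log (div_ne_zero hx hq) using 1
    field_simp
  simpa only [one_mul, mul_inv_cancel₀ hx] using (hasDerivAt_id' x).fun_mul hlog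

lemma smul_fderiv_log_s19 {f : E → ℝ} {θ₀ : E} (hf : DifferentiableAt ℝ f θ₀) (h₀ : f θ₀ ≠ 0) :
    f θ₀ • fderiv ℝ (fun θ => Real.log (f θ)) θ₀ = fderiv ℝ f θ₀ := by
  rw [fderiv.log hf h₀, smul_inv_smul₀ h₀]

variable {π : E → Y → ℝ} {θ₀ : E}

lemma sum_fderiv_eq_zero_of_eventually_sum_eq {c : ℝ}
    (hdiff : ∀ y, DifferentiableAt ℝ (fun θ => π θ y) θ₀)
    (hsum : ∀ᶠ θ in 𝓝 θ₀, ∑ y, π θ y = c) :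
    ∑ y, fderiv ℝ (fun θ => π θ y) θ₀ = 0 := by
  rw [← fderiv_fun_sum fun y _ => hdiff y, Filter.EventuallyEq.fderiv_eq hsum,
    fderiv_const_apply]

lemma hasFDerivAt_klDivergence {c : ℝ} {πref : Y → ℝ}
    (hdiff : ∀ y, DifferentiableAt ℝ (fun θ => π θ y) θ₀) (hsum : ∀ᶠ θ in 𝓝 θ₀, ∑ y, π θ y = c)
    (hne : ∀ y, π θ₀ y ≠ 0) (href : ∀ y, πref y ≠ 0) :
    HasFDerivAt (fun θ => klDivergence (π θ) πref)
      (∑ y, Real.log (π θ₀ y / πref y) • fderiv ℝ (fun θ => π θ y) θ₀) θ₀ := by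
  have hterms : HasFDerivAt (fun θ => klDivergence (π θ) πref)
      (∑ y, (Real.log (π θ₀ y / πref y) + 1) • fderiv ℝ (fun θ => π θ y) θ₀) θ₀ :=
    HasFDerivAt.fun_sum fun y _ => HasDerivAt.comp_hasFDerivAt (f := fun θ => π θ y) θ₀
      (hasDerivAt_mul_log_div (hne y) (href y)) (hdiff y).hasFDerivAt
  simpa only [add_smul, one_smul, sum_add_distrib, add_zero,
    sum_fderiv_eq_zero_of_eventually_sum_eq hdiff hsum] using hterms

end Calculus

theorem group_regularizer_gradient_eq_kl_gradient_general
    {E ι Y : Type*} [NormedAddCommGroup E] [NormedSpace ℝ E] [Fintype ι] [DecidableEq ι]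
    [Nonempty ι] [Fintype Y] {π : E → Y → ℝ} {θ₀ : E} (hπpos : ∀ y, 0 < π θ₀ y)
    (hπsum : ∀ᶠ θ in 𝓝 θ₀, ∑ y, π θ y = 1)
    (hπdiff : ∀ y, DifferentiableAt ℝ (fun θ => π θ y) θ₀)
    {πref : Y → ℝ} (hrefpos : ∀ y, 0 < πref y) :
    iidExpectation (π θ₀) (fun ys : ι → Y =>
        ((1 / (Fintype.card ι : ℝ)) * ∑ i, Real.log (π θ₀ (ys i) / πref (ys i))) •
          ∑ j, fderiv ℝ (fun θ => Real.log (π θ (ys j))) θ₀)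
      = fderiv ℝ (fun θ => klDivergence (π θ) πref) θ₀ := by
  have hne : ∀ y, π θ₀ y ≠ 0 := fun y => (hπpos y).ne'
  have hscore : ∀ y, π θ₀ y • fderiv ℝ (fun θ => Real.log (π θ y)) θ₀ =
      fderiv ℝ (fun θ => π θ y) θ₀ := fun y => smul_fderiv_log_s19 (hπdiff y) (hne y)
  have hscore_mean : ∑ y, π θ₀ y • fderiv ℝ (fun θ => Real.log (π θ y)) θ₀ = 0 := by
    simpa only [hscore] using sum_fderiv_eq_zero_of_eventually_sum_eq hπdiff hπsum
  have hcard : (Fintype.card ι : ℝ) ≠ 0 := Nat.cast_ne_zero.mpr Fintype.card_ne_zero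
  simp only [mul_smul]
  rw [iidExpectation_const_smul, iidExpectation_sum_smul_sum hπsum.self_of_nhds
      (fun y => Real.log (π θ₀ y / πref y)) hscore_mean,
    (hasFDerivAt_klDivergence hπdiff hπsum hne fun y => (hrefpos y).ne').fderiv,
    ← Nat.cast_smul_eq_nsmul ℝ, one_div, inv_smul_smul₀ hcard]
  simp only [smul_comm (π θ₀ _), hscore]

/-- For a parameterized policy `π` (positive, summing to one,
differentiable at `θ₀`), a strictly positive reference pmf `π_ref`, and `N ≥ 1`, the
expectation over `N` i.i.d. samples `(y₁, …, y_N) ~ π θ₀` (a sum over tuples in `Y^N`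
weighted by `∏_j π θ₀ y_j`) of the group-based regularizer gradient
`∑_{j=1}^N D_θ(log π θ y_j)|_{θ₀} · (1/N) ∑_{i=1}^N log(π θ₀ y_i / π_ref y_i)`
equals the exact reverse KL gradient
`D_θ(∑_{y∈Y} π θ y · log(π θ y / π_ref y))|_{θ₀}`. -/
theorem group_regularizer_gradient_eq_kl_gradient
    {Y : Type*} [Fintype Y] [Nonempty Y] (d N : ℕ) (hN : 1 ≤ N)
    (π : (Fin d → ℝ) → Y → ℝ) (θ₀ : Fin d → ℝ)
    (hπpos : ∀ θ y, 0 < π θ y) (hπsum : ∀ θ, ∑ y, π θ y = 1)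
    (hπdiff : ∀ y, DifferentiableAt ℝ (fun θ => π θ y) θ₀)
    (πref : Y → ℝ) (hrefpos : ∀ y, 0 < πref y) (hrefsum : ∑ y, πref y = 1) :
    ∑ ys : Fin N → Y, (∏ j, π θ₀ (ys j)) •
        (((1 / (N : ℝ)) * ∑ i, Real.log (π θ₀ (ys i) / πref (ys i))) •
          ∑ j, fderiv ℝ (fun θ => Real.log (π θ (ys j))) θ₀)
      = fderiv ℝ (fun θ => ∑ y, π θ y * Real.log (π θ y / πref y)) θ₀ := by
  have : Nonempty (Fin N) := ⟨⟨0, hN⟩⟩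
  simpa only [iidExpectation, klDivergence, Fintype.card_fin] using
    group_regularizer_gradient_eq_kl_gradient_general (ι := Fin N) (hπpos θ₀)
      (Filter.Eventually.of_forall hπsum) hπdiff hrefpos
end
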